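/- Let J be a positive integer, let λ ∈ (0,1), and let ℓ := ⌈2λJ/(1+λ)⌉. Define u_t := J·(J−t) for t = 1,…,J, v̂ := J − ℓ, and v_{j} := 1 if 1 ≤ j ≤ ℓ and v_j := 0 if ℓ < j ≤ J. Then for all integers t, j with 1 ≤ t < j ≤ J, we have u_t − u_j ≤ j·(v̂ + ∑_{j'=t+1}^{J} v_{j'}). -/

import Mathlib

/-! Counting the nonzero `v j'` gives `∑ j' ∈ (t, J], v j' = max (ℓ - t) 0`, so the bracket on the
right-hand side is at least `(J - ℓ) + (ℓ - t) = J - t`, whatever the threshold `ℓ ≤ J`. What is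
left, `J * (j - t) ≤ j * (J - t)`, amounts to `j * t ≤ J * t`. -/

theorem mul_sub_le_mul_sub_swap {R : Type*} [CommRing R] [PartialOrder R] [IsOrderedRing R]
    {a b c : R} (hba : b ≤ a) (hc : 0 ≤ c) : a * (b - c) ≤ b * (a - c) := by
  rw [mul_sub, mul_sub, mul_comm a b]
  exact sub_le_sub_left (mul_le_mul_of_nonneg_right hba hc) _

theorem sum_Icc_succ_ite_le {R : Type*} [NonAssocSemiring R] (t J ℓ : ℕ) :
    ∑ i ∈ Finset.Icc (t + 1) J, (if i ≤ ℓ then (1 : R) else 0) = ((min J ℓ - t : ℕ) : R) := by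
  have filter_eq : (Finset.Icc (t + 1) J).filter (· ≤ ℓ) = Finset.Icc (t + 1) (min J ℓ) := by
    ext i
    simp only [Finset.mem_filter, Finset.mem_Icc, le_min_iff, and_assoc]
  rw [Finset.sum_boole, filter_eq, Nat.card_Icc, Nat.add_sub_add_right]

theorem ceil_two_mul_div_one_add_le {K : Type*} [Field K] [LinearOrder K] [IsStrictOrderedRing K]
    [FloorSemiring K] {lam : K} (h0 : -1 < lam) (h1 : lam ≤ 1) (n : ℕ) :
    ⌈2 * lam * n / (1 + lam)⌉₊ ≤ n := by
  have two_mul_le : 2 * lam ≤ 1 + lam := by linarith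
  rw [Nat.ceil_le, div_le_iff₀ (by linarith), mul_comm (n : K)]
  exact mul_le_mul_of_nonneg_right two_mul_le n.cast_nonneg

theorem button_dual_feas_1_general {R : Type*} [CommRing R] [PartialOrder R] [IsOrderedRing R]
    {J ℓ : ℕ} (hℓ : ℓ ≤ J)
    {u : ℕ → R} (hu : ∀ t, u t = (J : R) * ((J : R) - (t : R)))
    {vhat : R} (hvhat : vhat = (J : R) - (ℓ : R))
    {v : ℕ → R} (hv : ∀ j, v j = if j ≤ ℓ then (1 : R) else 0)
    (t : ℕ) {j : ℕ} (hj : j ≤ J) :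
    u t - u j ≤ (j : R) * (vhat + ∑ j' ∈ Finset.Icc (t + 1) J, v j') := by
  have le_bracket : (J : R) - t ≤ vhat + ∑ j' ∈ Finset.Icc (t + 1) J, v j' := by
    have sub_le_cast : (ℓ : R) - t ≤ ((ℓ - t : ℕ) : R) :=
      sub_le_iff_le_add.mpr (mod_cast Nat.mono_cast (le_tsub_add : ℓ ≤ ℓ - t + t))
    simp only [hv, hvhat]
    rw [sum_Icc_succ_ite_le, min_eq_right hℓ, ← sub_add_sub_cancel (J : R) ℓ t]
    gcongr
  calc u t - u j = (J : R) * (j - t) := by rw [hu, hu]; ring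
    _ ≤ (j : R) * (J - t) := mul_sub_le_mul_sub_swap (Nat.mono_cast hj) t.cast_nonneg
    _ ≤ (j : R) * (vhat + ∑ j' ∈ Finset.Icc (t + 1) J, v j') :=
      mul_le_mul_of_nonneg_left le_bracket j.cast_nonneg

theorem button_dual_feas_1 (J : ℕ) (hJ : 0 < J) (lam : ℝ) (h0 : 0 < lam) (h1 : lam < 1)
    (ℓ : ℕ) (hℓ : ℓ = ⌈2 * lam * J / (1 + lam)⌉₊)
    (u : ℕ → ℝ) (hu : ∀ t, u t = (J : ℝ) * ((J : ℝ) - (t : ℝ)))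
    (vhat : ℝ) (hvhat : vhat = (J : ℝ) - (ℓ : ℝ))
    (v : ℕ → ℝ) (hv : ∀ j, v j = if j ≤ ℓ then (1 : ℝ) else 0) :
    ∀ t j : ℕ, 1 ≤ t → t < j → j ≤ J →
      u t - u j ≤ (j : ℝ) * (vhat + ∑ j' ∈ Finset.Icc (t + 1) J, v j') := by
  have ℓ_le : ℓ ≤ J := hℓ.trans_le (ceil_two_mul_div_one_add_le (by linarith) h1.le J)
  exact fun t _ _ _ hj ↦ button_dual_feas_1_general ℓ_le hu hvhat hv t hj
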